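/- arXiv:1904.05147 — 2 statements merged into one kernel-verified Lean document; each statement's English description precedes it below -/
import Mathlib

section
/- Existence and bound of the gradient (Theorem 3.2, second part): for every p > 2, integer n ≥ 2, r > 0 and M ≥ 0 there exists a constant C > 0 (depending only on p, n, r and M) such that the following holds. Let ε ∈ (0,1) with ε < r, and let u be a bounded Borel function on Ω_ε with sup_{Ω_ε}|u| ≤ M satisfying the DPP at every point of Ω. Then for every z₀ with B_{5r}(z₀) ⊂ Ω, the function u is differentiable at Lebesgue-almost every point of B_r(z₀), and its (Fréchet) gradient satisfies |Du(z)| ≤ C for almost every z ∈ B_r(z₀). -/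
open MeasureTheory Metric Set

/-!
Normalise to a function `v` on the whole space with `|v| ≤ M` that satisfies the DPP near `z₀`.

At scales above `ε`, compare the oscillation of `v` over `ball y s` with a barrier that is concave
in `s` and quadratic in `y - z₀`. Given `x, x' ∈ ball y s`, couple the two games by translating the
noise, which moves the centre `y`, and by letting the players move in opposite directions, which
changes the radius to `s ± t`. The noise raises the barrier by at most a multiple of `ε²`, the
tug-of-war moves lower it by a larger multiple, so any excess of the oscillation over the barrier
shrinks by a fixed amount each round and must vanish. This bounds the oscillation over a ball of
radius `s` by `K (s + ε)`.

At scales below `ε`, the DPP itself regularises: each of its terms differs between `x` and `y` by at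
most a multiple of `|x - y| / ε` times the oscillation over `ball y (2ε)`, which is at most `3Kε`.
So `v` is Lipschitz, and Rademacher's theorem applies.
-/

theorem zero_of_forall_max_sub {P : ℝ → Prop} {θ δ : ℝ} (hδ : 0 < δ) (hθ : 0 ≤ θ) (hP : P θ)
    (hstep : ∀ θ, 0 ≤ θ → P θ → P (max (θ - δ) 0)) : P 0 := by
  have hiter : ∀ k : ℕ, P (max (θ - k * δ) 0) := by
    intro k
    induction k with
    | zero => simpa [hθ] using hP
    | succ k ih =>
      have hmax : max (max (θ - k * δ) 0 - δ) 0 = max (θ - (k + 1 : ℕ) * δ) 0 := by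
        rw [← max_sub_sub_right, zero_sub, max_assoc, max_eq_right (neg_nonpos.2 hδ.le)]
        push_cast
        ring_nf
      exact hmax ▸ hstep _ (le_max_right _ _) ih
  obtain ⟨k, hk⟩ := exists_nat_ge (θ / δ)
  have hk' : θ - k * δ ≤ 0 := sub_nonpos.2 ((div_le_iff₀ hδ).1 hk)
  simpa [hk'] using hiter k

section Oscillation

/-- The oscillation of `f` over `S` is at most `G`. It is expressed through pairs of points, so that
no boundedness of `f` is needed. -/
def OscLE {E : Type*} (f : E → ℝ) (S : Set E) (G : ℝ) : Prop :=
  ∀ x ∈ S, ∀ y ∈ S, f x - f y ≤ G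

variable {E : Type*} {f : E → ℝ} {S T U : Set E} {G M : ℝ}

theorem bddAbove_image_of_abs_le (hf : ∀ x, |f x| ≤ M) (S : Set E) : BddAbove (f '' S) :=
  ⟨M, forall_mem_image.2 fun a _ => (abs_le.1 (hf a)).2⟩

theorem bddBelow_image_of_abs_le (hf : ∀ x, |f x| ≤ M) (S : Set E) : BddBelow (f '' S) :=
  ⟨-M, forall_mem_image.2 fun a _ => (abs_le.1 (hf a)).1⟩

theorem sInf_image_eq_neg_sSup_image_neg (f : E → ℝ) (S : Set E) :
    sInf (f '' S) = -sSup ((fun x => -f x) '' S) := by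
  rw [Real.sInf_def, ← image_neg_eq_neg, image_image]

namespace OscLE

theorem mono (h : OscLE f T G) (hST : S ⊆ T) : OscLE f S G :=
  fun x hx y hy => h x (hST hx) y (hST hy)

theorem neg (h : OscLE f S G) : OscLE (fun x => -f x) S G :=
  fun x hx y hy => by linarith [h y hy x hx]

theorem of_abs_le (hf : ∀ x, |f x| ≤ M) (S : Set E) : OscLE f S (2 * M) :=
  fun x _ y _ => by linarith [abs_le.1 (hf x), abs_le.1 (hf y)]

theorem sSup_image_sub_sInf_image_le (h : OscLE f U G) (hS : S.Nonempty) (hT : T.Nonempty)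
    (hSU : S ⊆ U) (hTU : T ⊆ U) : sSup (f '' S) - sInf (f '' T) ≤ G := by
  rw [sub_le_comm]
  refine le_csInf (hT.image f) (forall_mem_image.2 fun b hb => ?_)
  rw [sub_le_iff_le_add]
  refine csSup_le (hS.image f) (forall_mem_image.2 fun a ha => ?_)
  linarith [h a (hSU ha) b (hTU hb)]

theorem sInf_image_sub_sSup_image_le (h : OscLE f U G) (hf : ∀ x, |f x| ≤ M)
    (hSU : (S ∩ U).Nonempty) (hTU : (T ∩ U).Nonempty) : sInf (f '' S) - sSup (f '' T) ≤ G := by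
  obtain ⟨a, haS, haU⟩ := hSU
  obtain ⟨b, hbT, hbU⟩ := hTU
  linarith [h a haU b hbU, csInf_le (bddBelow_image_of_abs_le hf S) (mem_image_of_mem f haS),
    le_csSup (bddAbove_image_of_abs_le hf T) (mem_image_of_mem f hbT)]

theorem exists_mapsTo_Icc (h : OscLE f S G) : ∃ q, MapsTo f S (Icc q (q + G)) := by
  rcases S.eq_empty_or_nonempty with rfl | hS
  · exact ⟨0, mapsTo_empty _ _⟩
  have hlower : ∀ x ∈ S, f x - G ∈ lowerBounds (f '' S) := fun x hx =>
    forall_mem_image.2 fun y hy => by linarith [h x hx y hy]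
  obtain ⟨x₀, hx₀⟩ := hS
  refine ⟨sInf (f '' S), fun x hx => ⟨csInf_le ⟨_, hlower x₀ hx₀⟩ (mem_image_of_mem f hx), ?_⟩⟩
  exact sub_le_iff_le_add.1 (le_csInf ⟨_, mem_image_of_mem f hx₀⟩ (hlower x hx))

theorem setIntegral_sub_setIntegral_le [MeasurableSpace E] {μ : Measure E} (h : OscLE f (S ∪ T) G)
    (hS : MeasurableSet S) (hT : MeasurableSet T) (hμ : μ.real S = μ.real T) (hμS : μ S ≠ ⊤)
    (hμT : μ T ≠ ⊤) (hfS : IntegrableOn f S μ) (hfT : IntegrableOn f T μ) :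
    (∫ x in S, f x ∂μ) - ∫ x in T, f x ∂μ ≤ G * μ.real (S \ T) := by
  obtain ⟨q, hq⟩ := h.exists_mapsTo_Icc
  have hμST : μ (S \ T) ≠ ⊤ := measure_ne_top_of_subset sdiff_subset hμS
  have hμTS : μ (T \ S) ≠ ⊤ := measure_ne_top_of_subset sdiff_subset hμT
  have hvol : μ.real (T \ S) = μ.real (S \ T) := by
    have h₁ := measureReal_inter_add_sdiff (s := S) hT hμS
    have h₂ := measureReal_inter_add_sdiff (s := T) hS hμT
    rw [inter_comm] at h₂
    linarith
  have hupper : ∫ x in S \ T, f x ∂μ ≤ μ.real (S \ T) * (q + G) := by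
    rw [← smul_eq_mul, ← setIntegral_const]
    exact setIntegral_mono_on (hfS.mono_set sdiff_subset) (integrableOn_const hμST)
      (hS.diff hT) fun x hx => (hq (Or.inl hx.1)).2
  have hlower : q * μ.real (T \ S) ≤ ∫ x in T \ S, f x ∂μ :=
    setIntegral_ge_of_const_le_real (hT.diff hS) hμTS (fun x hx => (hq (Or.inr hx.1)).1)
      (hfT.mono_set sdiff_subset)
  rw [← integral_inter_add_sdiff hT hfS, ← integral_inter_add_sdiff hS hfT, inter_comm T S]
  rw [hvol] at hlower
  linarith

end OscLE

end Oscillation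

section TugOfWar

/-- The sum of the values that the maximiser and the minimiser reach from `x` with moves of length
less than `t`: the integrand of the tug-of-war term of the dynamic programming principle. -/
noncomputable def tugOfWarSum {E : Type*} [PseudoMetricSpace E] (v : E → ℝ) (x : E) (t : ℝ) : ℝ :=
  sSup (v '' ball x t) + sInf (v '' ball x t)

theorem intervalIntegrable_of_monotoneOn_of_abs_le {f : ℝ → ℝ} {a b M : ℝ} (hab : a ≤ b)
    (hf : MonotoneOn f (Ioc a b)) (hM : ∀ t ∈ Ioc a b, |f t| ≤ M) :
    IntervalIntegrable f volume a b := by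
  rw [intervalIntegrable_iff_integrableOn_Ioc_of_le hab]
  refine Integrable.of_bound
    (aemeasurable_restrict_of_monotoneOn measurableSet_Ioc hf).aestronglyMeasurable M ?_
  filter_upwards [ae_restrict_mem measurableSet_Ioc] with t ht using hM t ht

theorem integral_le_integral_add_of_le_shift {f g : ℝ → ℝ} {d ε G : ℝ} (hd : 0 ≤ d) (hdε : d ≤ ε)
    (hf : IntervalIntegrable f volume 0 ε) (hg : IntervalIntegrable g volume 0 ε)
    (hshift : ∀ t ∈ Ioo 0 (ε - d), f t ≤ g (t + d))
    (hosc : ∀ t ∈ Ioo 0 d, f (t + (ε - d)) ≤ g t + G) :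
    ∫ t in 0..ε, f t ≤ (∫ t in 0..ε, g t) + d * G := by
  have hsub : ∀ {h : ℝ → ℝ}, IntervalIntegrable h volume 0 ε → ∀ {a b}, 0 ≤ a → a ≤ b → b ≤ ε →
      IntervalIntegrable h volume a b := fun hh a b ha hab hb => hh.mono_set (by
    rw [uIcc_of_le hab, uIcc_of_le (ha.trans (hab.trans hb))]
    exact Icc_subset_Icc ha hb)
  have hf₁ := hsub hf le_rfl (sub_nonneg.2 hdε) (sub_le_self ε hd)
  have hf₂ := hsub hf (sub_nonneg.2 hdε) (sub_le_self ε hd) le_rfl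
  have hg₁ := hsub hg le_rfl hd hdε
  have hg₂ := hsub hg hd hdε le_rfl
  have hbulk : ∫ t in 0..(ε - d), f t ≤ ∫ t in d..ε, g t := calc
    _ ≤ ∫ t in 0..(ε - d), g (t + d) :=
      intervalIntegral.integral_mono_on_of_le_Ioo (sub_nonneg.2 hdε) hf₁
        (by simpa using hg₂.comp_add_right d) hshift
    _ = ∫ t in d..ε, g t := by simp
  have hend : ∫ t in (ε - d)..ε, f t ≤ (∫ t in 0..d, g t) + d * G := calc
    _ = ∫ t in 0..d, f (t + (ε - d)) := by simp
    _ ≤ ∫ t in 0..d, (g t + G) :=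
      intervalIntegral.integral_mono_on_of_le_Ioo hd
        (by simpa using hf₂.comp_add_right (ε - d)) (hg₁.add (by simp)) hosc
    _ = _ := by rw [intervalIntegral.integral_add hg₁ (by simp)]; simp
  rw [← intervalIntegral.integral_add_adjacent_intervals hf₁ hf₂,
    ← intervalIntegral.integral_add_adjacent_intervals hg₁ hg₂]
  linarith

section PseudoMetricSpace

variable {E : Type*} [PseudoMetricSpace E] {v : E → ℝ} {M ε : ℝ}

theorem abs_sSup_image_ball_le (hv : ∀ x, |v x| ≤ M) (x : E) {t : ℝ} (ht : 0 < t) :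
    |sSup (v '' ball x t)| ≤ M := by
  have hx : v x ∈ v '' ball x t := mem_image_of_mem v (mem_ball_self ht)
  exact abs_le.2 ⟨(abs_le.1 (hv x)).1.trans (le_csSup (bddAbove_image_of_abs_le hv _) hx),
    csSup_le ⟨_, hx⟩ (forall_mem_image.2 fun a _ => (abs_le.1 (hv a)).2)⟩

theorem intervalIntegrable_sSup_image_ball (hv : ∀ x, |v x| ≤ M) (x : E) (hε : 0 ≤ ε) :
    IntervalIntegrable (fun t => sSup (v '' ball x t)) volume 0 ε :=
  intervalIntegrable_of_monotoneOn_of_abs_le hε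
    (fun _ hs _ _ hst => csSup_le_csSup (bddAbove_image_of_abs_le hv _)
      ((nonempty_ball.2 hs.1).image v) (image_mono (ball_subset_ball hst)))
    (fun _ ht => abs_sSup_image_ball_le hv x ht.1)

theorem intervalIntegrable_sInf_image_ball (hv : ∀ x, |v x| ≤ M) (x : E) (hε : 0 ≤ ε) :
    IntervalIntegrable (fun t => sInf (v '' ball x t)) volume 0 ε := by
  simp_rw [sInf_image_eq_neg_sSup_image_neg v]
  exact (intervalIntegrable_sSup_image_ball (M := M) (by simpa using hv) x hε).neg

theorem intervalIntegrable_tugOfWarSum (hv : ∀ x, |v x| ≤ M) (x : E) (hε : 0 ≤ ε) :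
    IntervalIntegrable (tugOfWarSum v x) volume 0 ε :=
  (intervalIntegrable_sSup_image_ball hv x hε).add (intervalIntegrable_sInf_image_ball hv x hε)

theorem integral_sSup_image_ball_le {x y : E} {G : ℝ} (hv : ∀ x, |v x| ≤ M) (hxy : dist x y ≤ ε)
    (hosc : OscLE v (ball x ε ∪ ball y ε) G) :
    ∫ t in 0..ε, sSup (v '' ball x t) ≤ (∫ t in 0..ε, sSup (v '' ball y t)) + dist x y * G := by
  have hε : 0 ≤ ε := dist_nonneg.trans hxy
  refine integral_le_integral_add_of_le_shift dist_nonneg hxy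
    (intervalIntegrable_sSup_image_ball hv x hε) (intervalIntegrable_sSup_image_ball hv y hε)
    (fun t ht => ?_) (fun t ht => ?_)
  · exact csSup_le_csSup (bddAbove_image_of_abs_le hv _) ((nonempty_ball.2 ht.1).image v)
      (image_mono (ball_subset_ball' le_rfl))
  · have hx : ball x (t + (ε - dist x y)) ⊆ ball x ε := ball_subset_ball (by linarith [ht.2])
    have hy : ball y t ⊆ ball y ε := ball_subset_ball (ht.2.le.trans hxy)
    have hsub := hosc.sSup_image_sub_sInf_image_le (nonempty_ball.2 (by linarith [ht.1]))
      (nonempty_ball.2 ht.1) (hx.trans subset_union_left) (hy.trans subset_union_right)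
    have hle : sInf (v '' ball y t) ≤ sSup (v '' ball y t) :=
      Real.sInf_le_sSup _ (bddBelow_image_of_abs_le hv _) (bddAbove_image_of_abs_le hv _)
    linarith

theorem integral_sInf_image_ball_le {x y : E} {G : ℝ} (hv : ∀ x, |v x| ≤ M) (hxy : dist x y ≤ ε)
    (hosc : OscLE v (ball x ε ∪ ball y ε) G) :
    ∫ t in 0..ε, sInf (v '' ball x t) ≤ (∫ t in 0..ε, sInf (v '' ball y t)) + dist x y * G := by
  have h := integral_sSup_image_ball_le (v := fun x => -v x) (x := y) (y := x) (M := M)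
    (ε := ε) (G := G) (by simpa using hv) (by rwa [dist_comm]) (by rw [union_comm]; exact hosc.neg)
  simp_rw [sInf_image_eq_neg_sSup_image_neg v]
  rw [intervalIntegral.integral_neg, intervalIntegral.integral_neg]
  rw [dist_comm] at h
  linarith

theorem integral_tugOfWarSum_sub_le {x y : E} {G : ℝ} (hv : ∀ x, |v x| ≤ M) (hxy : dist x y ≤ ε)
    (hosc : OscLE v (ball x ε ∪ ball y ε) G) :
    (∫ t in 0..ε, tugOfWarSum v x t) - (∫ t in 0..ε, tugOfWarSum v y t) ≤ 2 * dist x y * G := by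
  have hadd : ∀ w : E, ∫ t in 0..ε, tugOfWarSum v w t
      = (∫ t in 0..ε, sSup (v '' ball w t)) + ∫ t in 0..ε, sInf (v '' ball w t) := fun w =>
    intervalIntegral.integral_add
      (intervalIntegrable_sSup_image_ball hv w (dist_nonneg.trans hxy))
      (intervalIntegrable_sInf_image_ball hv w (dist_nonneg.trans hxy))
  rw [hadd, hadd]
  linarith [integral_sSup_image_ball_le hv hxy hosc, integral_sInf_image_ball_le hv hxy hosc]

end PseudoMetricSpace

variable {E : Type*} [SeminormedAddCommGroup E] [NormedSpace ℝ E] {v : E → ℝ} {M : ℝ}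

/-- The supremum at `x` and the infimum at `x'` are over moves that stay in `ball y (s + t)`. The
other two are bounded by letting both points move towards `y`, into `ball y (s - t)`. -/
theorem tugOfWarSum_sub_le_add_of_oscLE (hv : ∀ x, |v x| ≤ M) {x x' y : E} {s t G₁ G₂ : ℝ}
    (ht : 0 < t) (hx : x ∈ ball y s) (hx' : x' ∈ ball y s) (hG₂ : 0 ≤ G₂)
    (hosc₁ : OscLE v (ball y (s + t)) G₁) (hosc₂ : OscLE v (ball y (s - t)) G₂) :
    tugOfWarSum v x t - tugOfWarSum v x' t ≤ G₁ + G₂ := by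
  have hsub : ∀ w ∈ ball y s, ball w t ⊆ ball y (s + t) := fun w hw =>
    ball_subset_ball' (by linarith [mem_ball.1 hw])
  have hout : sSup (v '' ball x t) - sInf (v '' ball x' t) ≤ G₁ :=
    hosc₁.sSup_image_sub_sInf_image_le (nonempty_ball.2 ht) (nonempty_ball.2 ht) (hsub x hx)
      (hsub x' hx')
  have hin : sInf (v '' ball x t) - sSup (v '' ball x' t) ≤ G₂ := by
    rcases le_or_gt s t with hst | hst
    · have hmem : ∀ w ∈ ball y s, (ball w t ∩ {y}).Nonempty := fun w hw =>
        ⟨y, mem_ball'.2 ((mem_ball.1 hw).trans_le hst), rfl⟩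
      have hself : OscLE v {y} G₂ := by rintro _ rfl _ rfl; simpa using hG₂
      exact hself.sInf_image_sub_sSup_image_le hv (hmem x hx) (hmem x' hx')
    · have hmem : ∀ w ∈ ball y s, (ball w t ∩ ball y (s - t)).Nonempty := fun w hw => by
        obtain ⟨a, hwa, hay⟩ :=
          exists_dist_lt_lt ht (sub_pos.2 hst) (by simpa using mem_ball.1 hw)
        exact ⟨a, mem_ball'.2 hwa, hay⟩
      exact hosc₂.sInf_image_sub_sSup_image_le hv (hmem x hx) (hmem x' hx')
  simp only [tugOfWarSum]
  linarith

end TugOfWar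

section BallAverage

variable {E : Type*} [NormedAddCommGroup E] [MeasurableSpace E] {μ : Measure E}
  [μ.IsAddHaarMeasure] {v : E → ℝ} {ε : ℝ}

section Translation

variable [BorelSpace E]

theorem setAverage_ball_eq (v : E → ℝ) (x : E) (t : ℝ) :
    ⨍ z in ball x t, v z ∂μ = (μ.real (ball 0 t))⁻¹ * ∫ z in ball x t, v z ∂μ := by
  rw [setAverage_eq, smul_eq_mul, Measure.addHaar_real_ball_center]

theorem setIntegral_ball_eq_setIntegral_ball_zero (v : E → ℝ) (x : E) (t : ℝ) :
    ∫ z in ball x t, v z ∂μ = ∫ h in ball 0 t, v (x + h) ∂μ := by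
  simpa using ((measurePreserving_add_left μ x).setIntegral_preimage_emb
    (measurableEmbedding_addLeft x) v (ball x t)).symm

theorem integrableOn_ball_zero_comp_add {x : E} (hv : IntegrableOn v (ball x ε) μ) :
    IntegrableOn (fun h => v (x + h)) (ball 0 ε) μ := by
  simpa [Function.comp_def] using ((measurePreserving_add_left μ x).integrableOn_comp_preimage
    (measurableEmbedding_addLeft x)).2 hv

end Translation

variable [NormedSpace ℝ E] [FiniteDimensional ℝ E]

theorem integrableOn_ball_of_abs_le {M : ℝ} (hvm : AEStronglyMeasurable v μ)
    (hv : ∀ x, |v x| ≤ M) (x : E) (t : ℝ) : IntegrableOn v (ball x t) μ :=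
  Measure.integrableOn_of_bounded (M := M) measure_ball_lt_top.ne hvm (.of_forall hv)

theorem real_ball_zero_pos (hε : 0 < ε) : 0 < μ.real (ball (0 : E) ε) :=
  ENNReal.toReal_pos (measure_ball_pos μ 0 hε).ne' measure_ball_lt_top.ne

variable [BorelSpace E]

theorem setIntegral_ball_zero_clm (ℓ : E →L[ℝ] ℝ) (t : ℝ) : ∫ h in ball 0 t, ℓ h ∂μ = 0 := by
  have hneg := (Measure.measurePreserving_neg μ).setIntegral_preimage_emb
    (MeasurableEquiv.neg E).measurableEmbedding ℓ (ball 0 t)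
  simp only [neg_preimage, map_neg, integral_neg, neg_ball, neg_zero] at hneg
  linarith

theorem setAverage_ball_sub_le_of_translate (hε : 0 < ε) {x x' : E}
    (hx : IntegrableOn v (ball x ε) μ) (hx' : IntegrableOn v (ball x' ε) μ) {k : ℝ}
    (ℓ : E →L[ℝ] ℝ) (hk : ∀ h ∈ ball (0 : E) ε, v (x + h) - v (x' + h) ≤ k + ℓ h) :
    (⨍ z in ball x ε, v z ∂μ) - ⨍ z in ball x' ε, v z ∂μ ≤ k := by
  have hvx := integrableOn_ball_zero_comp_add hx
  have hvx' := integrableOn_ball_zero_comp_add hx'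
  have hconst : IntegrableOn (fun _ : E => k) (ball 0 ε) μ :=
    integrableOn_const measure_ball_lt_top.ne
  have hℓ : IntegrableOn ℓ (ball 0 ε) μ :=
    (ℓ.continuous.locallyIntegrable.integrableOn_isCompact
      (isCompact_closedBall (0 : E) ε)).mono_set ball_subset_closedBall
  rw [setAverage_ball_eq, setAverage_ball_eq, ← mul_sub, inv_mul_le_iff₀ (real_ball_zero_pos hε),
    setIntegral_ball_eq_setIntegral_ball_zero v x, setIntegral_ball_eq_setIntegral_ball_zero v x',
    ← integral_sub hvx hvx']
  calc ∫ h in ball 0 ε, (v (x + h) - v (x' + h)) ∂μ ≤ ∫ h in ball 0 ε, (k + ℓ h) ∂μ :=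
        setIntegral_mono_on (hvx.sub hvx') (hconst.add hℓ) measurableSet_ball hk
    _ = μ.real (ball 0 ε) * k := by
        rw [integral_add hconst hℓ, setIntegral_ball_zero_clm, setIntegral_const, add_zero,
          smul_eq_mul]

theorem real_ball_sdiff_ball_le {x y : E} (hxy : dist x y < ε) :
    μ.real (ball x ε \ ball y ε)
      ≤ μ.real (ball (0 : E) ε) * (Module.finrank ℝ E * (dist x y / ε)) := by
  have hε : 0 < ε := dist_nonneg.trans_lt hxy
  set d := dist x y
  have hd : 0 ≤ d := dist_nonneg
  have hsub : ball x (ε - d) ⊆ ball x ε := ball_subset_ball (sub_le_self ε hd)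
  have hsub' : ball x ε \ ball y ε ⊆ ball x ε \ ball x (ε - d) :=
    sdiff_subset_sdiff_right (ball_subset_ball' (by simp [d]))
  have hfin : ∀ t, μ (ball x t) ≠ ⊤ := fun t => measure_ball_lt_top.ne
  have hvol : ∀ t, 0 < t → μ.real (ball x t) = t ^ Module.finrank ℝ E * μ.real (ball (0 : E) 1) :=
    fun t ht => by
      rw [Measure.real, Measure.addHaar_ball_of_pos μ x ht, ENNReal.toReal_mul,
        ENNReal.toReal_ofReal (by positivity), Measure.real]
  have hbernoulli := one_add_mul_le_pow (a := -(d / ε))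
    (by linarith [(div_le_one hε).2 hxy.le]) (Module.finrank ℝ E)
  have hsplit : ε - d = ε * (1 + -(d / ε)) := by field_simp; ring
  calc μ.real (ball x ε \ ball y ε) ≤ μ.real (ball x ε \ ball x (ε - d)) :=
        measureReal_mono hsub' (measure_ne_top_of_subset sdiff_subset (hfin ε))
    _ = μ.real (ball x ε) - μ.real (ball x (ε - d)) :=
        measureReal_sdiff hsub measurableSet_ball (hfin _)
    _ = μ.real (ball x ε) * (1 - (1 + -(d / ε)) ^ Module.finrank ℝ E) := by
        rw [hvol _ hε, hvol _ (sub_pos.2 hxy), hsplit, mul_pow]; ring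
    _ ≤ μ.real (ball x ε) * (Module.finrank ℝ E * (d / ε)) := by
        gcongr; linarith
    _ = _ := by rw [Measure.addHaar_real_ball_center]

theorem setAverage_ball_sub_le_of_oscLE {x y : E} (hxy : dist x y < ε)
    (hx : IntegrableOn v (ball x ε) μ) (hy : IntegrableOn v (ball y ε) μ) {G : ℝ}
    (hosc : OscLE v (ball x ε ∪ ball y ε) G) :
    (⨍ z in ball x ε, v z ∂μ) - ⨍ z in ball y ε, v z ∂μ
      ≤ G * (Module.finrank ℝ E * (dist x y / ε)) := by
  have hε : 0 < ε := dist_nonneg.trans_lt hxy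
  have hyy : y ∈ ball x ε ∪ ball y ε := Or.inr (mem_ball_self hε)
  have hG : 0 ≤ G := by simpa using hosc y hyy y hyy
  have hvol : μ.real (ball x ε) = μ.real (ball y ε) :=
    (Measure.addHaar_real_ball_center μ x ε).trans (Measure.addHaar_real_ball_center μ y ε).symm
  rw [setAverage_ball_eq, setAverage_ball_eq, ← mul_sub, inv_mul_le_iff₀ (real_ball_zero_pos hε)]
  calc (∫ z in ball x ε, v z ∂μ) - ∫ z in ball y ε, v z ∂μ ≤ G * μ.real (ball x ε \ ball y ε) :=
        hosc.setIntegral_sub_setIntegral_le measurableSet_ball measurableSet_ball hvol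
          measure_ball_lt_top.ne measure_ball_lt_top.ne hx hy
    _ ≤ G * (μ.real (ball (0 : E) ε) * (Module.finrank ℝ E * (dist x y / ε))) := by
        gcongr; exact real_ball_sdiff_ball_le hxy
    _ = _ := by ring

end BallAverage

/-- The dynamic programming principle at the point `x`, with step size `ε`, probability `α` of a
tug-of-war move and probability `β` of a random move. -/
def SatisfiesDPPAt {E : Type*} [PseudoMetricSpace E] [MeasurableSpace E] (μ : Measure E)
    (α β ε : ℝ) (v : E → ℝ) (x : E) : Prop :=
  v x = α / (2 * ε) * (∫ t in (0 : ℝ)..ε, tugOfWarSum v x t) + β * ⨍ z in ball x ε, v z ∂μ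

namespace SatisfiesDPPAt

theorem congr {E : Type*} [PseudoMetricSpace E] [MeasurableSpace E] [OpensMeasurableSpace E]
    {μ : Measure E} {α β ε : ℝ} {u v : E → ℝ} {x : E} (hu : SatisfiesDPPAt μ α β ε u x)
    (hε : 0 < ε) (huv : EqOn u v (ball x ε)) : SatisfiesDPPAt μ α β ε v x := by
  have htug : ∫ t in (0 : ℝ)..ε, tugOfWarSum u x t = ∫ t in (0 : ℝ)..ε, tugOfWarSum v x t := by
    refine intervalIntegral.integral_congr fun t ht => ?_
    rw [uIcc_of_le hε.le] at ht
    simp only [tugOfWarSum, (huv.mono (ball_subset_ball ht.2)).image_eq]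
  have havg : ⨍ z in ball x ε, u z ∂μ = ⨍ z in ball x ε, v z ∂μ :=
    setAverage_congr_fun measurableSet_ball (.of_forall fun z hz => huv hz)
  rwa [SatisfiesDPPAt, ← htug, ← havg, ← huv (mem_ball_self hε)]

variable {E : Type*} [NormedAddCommGroup E] [NormedSpace ℝ E] [FiniteDimensional ℝ E]
  [MeasurableSpace E] [BorelSpace E] {μ : Measure E} [μ.IsAddHaarMeasure] {v : E → ℝ}
  {M α β ε : ℝ}

theorem sub_le_of_translate (hε : 0 < ε) (hα : 0 ≤ α) (hβ : 0 ≤ β)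
    (hvm : AEStronglyMeasurable v μ) (hv : ∀ x, |v x| ≤ M) {x x' : E}
    (hx : SatisfiesDPPAt μ α β ε v x) (hx' : SatisfiesDPPAt μ α β ε v x') {κ c k : ℝ}
    (ℓ : E →L[ℝ] ℝ) (hnoise : ∀ h ∈ ball (0 : E) ε, v (x + h) - v (x' + h) ≤ k + ℓ h)
    (htug : ∀ t ∈ Ioo 0 ε, tugOfWarSum v x t - tugOfWarSum v x' t ≤ 2 * (κ - c * t ^ 2)) :
    v x - v x' ≤ α * (κ - c * ε ^ 2 / 3) + β * k := by
  have hI := fun y => intervalIntegrable_tugOfWarSum hv y hε.le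
  have hquad : IntervalIntegrable (fun t : ℝ => c * t ^ 2) volume 0 ε :=
    Continuous.intervalIntegrable (by fun_prop) _ _
  have hint : (∫ t in (0 : ℝ)..ε, tugOfWarSum v x t) - (∫ t in (0 : ℝ)..ε, tugOfWarSum v x' t)
      ≤ 2 * ε * (κ - c * ε ^ 2 / 3) := by
    rw [← intervalIntegral.integral_sub (hI x) (hI x')]
    calc _ ≤ ∫ t in (0 : ℝ)..ε, 2 * (κ - c * t ^ 2) :=
          intervalIntegral.integral_mono_on_of_le_Ioo hε.le ((hI x).sub (hI x'))
            (Continuous.intervalIntegrable (by fun_prop) _ _) htug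
      _ = 2 * ε * (κ - c * ε ^ 2 / 3) := by
          rw [intervalIntegral.integral_const_mul, intervalIntegral.integral_sub (by simp) hquad,
            intervalIntegral.integral_const, intervalIntegral.integral_const_mul, integral_pow]
          simp only [smul_eq_mul]
          ring
  have havg := setAverage_ball_sub_le_of_translate hε (integrableOn_ball_of_abs_le hvm hv x ε)
    (integrableOn_ball_of_abs_le hvm hv x' ε) ℓ hnoise
  calc v x - v x'
      = α / (2 * ε) * ((∫ t in (0 : ℝ)..ε, tugOfWarSum v x t)
            - ∫ t in (0 : ℝ)..ε, tugOfWarSum v x' t)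
          + β * ((⨍ z in ball x ε, v z ∂μ) - ⨍ z in ball x' ε, v z ∂μ) := by
        rw [hx, hx']; ring
    _ ≤ α / (2 * ε) * (2 * ε * (κ - c * ε ^ 2 / 3)) + β * k := by gcongr
    _ = α * (κ - c * ε ^ 2 / 3) + β * k := by field_simp

theorem sub_le_of_dist_lt (hα : 0 ≤ α) (hβ : 0 ≤ β)
    (hvm : AEStronglyMeasurable v μ) (hv : ∀ x, |v x| ≤ M) {x y : E}
    (hx : SatisfiesDPPAt μ α β ε v x) (hy : SatisfiesDPPAt μ α β ε v y) (hxy : dist x y < ε)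
    {G : ℝ} (hosc : OscLE v (ball y (2 * ε)) G) :
    v x - v y ≤ (α + β * Module.finrank ℝ E) * G / ε * dist x y := by
  have hε : 0 < ε := dist_nonneg.trans_lt hxy
  have hosc' : OscLE v (ball x ε ∪ ball y ε) G := hosc.mono <|
    union_subset (ball_subset_ball' (by linarith)) (ball_subset_ball (by linarith))
  have htug := integral_tugOfWarSum_sub_le hv hxy.le hosc'
  have havg := setAverage_ball_sub_le_of_oscLE hxy (integrableOn_ball_of_abs_le hvm hv x ε)
    (integrableOn_ball_of_abs_le hvm hv y ε) hosc'
  calc v x - v y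
      = α / (2 * ε) * ((∫ t in (0 : ℝ)..ε, tugOfWarSum v x t)
            - ∫ t in (0 : ℝ)..ε, tugOfWarSum v y t)
          + β * ((⨍ z in ball x ε, v z ∂μ) - ⨍ z in ball y ε, v z ∂μ) := by
        rw [hx, hy]; ring
    _ ≤ α / (2 * ε) * (2 * dist x y * G) + β * (G * (Module.finrank ℝ E * (dist x y / ε))) := by
        gcongr
    _ = (α + β * Module.finrank ℝ E) * G / ε * dist x y := by field_simp

end SatisfiesDPPAt

section Barrier

variable {E : Type*} [NormedAddCommGroup E] {v : E → ℝ} {c A r ε s t θ M : ℝ} {y z Z h : E}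

/-- The barrier for the oscillation over `ball (z + Z) s`. The radius enters through `s + ε`, which
stays positive when a tug-of-war move of length less than `ε` shrinks the ball to a point. -/
def oscBarrier (c A r ε s : ℝ) (Z : E) : ℝ :=
  c * (A * (6 * r * (s + ε) - (s + ε) ^ 2) + ‖Z‖ ^ 2)

theorem oscBarrier_add_add_oscBarrier_sub :
    oscBarrier c A r ε (s + t) Z + oscBarrier c A r ε (s - t) Z
      = 2 * (oscBarrier c A r ε s Z - c * A * t ^ 2) := by
  simp only [oscBarrier]
  ring

theorem oscBarrier_nonneg (hc : 0 ≤ c) (hA : 0 ≤ A) (hs : 0 ≤ s + ε) (hsr : s + ε ≤ 3 * r) :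
    0 ≤ oscBarrier c A r ε s Z := by
  have hquad : 0 ≤ 6 * r * (s + ε) - (s + ε) ^ 2 := by nlinarith
  unfold oscBarrier
  positivity

theorem mul_sq_le_oscBarrier (hc : 0 ≤ c) (hA : 1 ≤ A) (hr : 0 ≤ r) (hs : 0 ≤ s + ε)
    (hsr : s + ε ≤ 3 * r) (hfar : r ≤ s + ε ∨ r ≤ ‖Z‖) : c * r ^ 2 ≤ oscBarrier c A r ε s Z := by
  have hquad : 0 ≤ 6 * r * (s + ε) - (s + ε) ^ 2 := by nlinarith
  refine mul_le_mul_of_nonneg_left ?_ hc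
  rcases hfar with hs' | hZ
  · have : r ^ 2 ≤ 6 * r * (s + ε) - (s + ε) ^ 2 := by nlinarith
    nlinarith [sq_nonneg ‖Z‖]
  · have : r ^ 2 ≤ ‖Z‖ ^ 2 := by gcongr
    nlinarith

/-- The oscillation of `v` exceeds the barrier centred at `z` by at most `θ`, over all balls whose
radius and whose centre's distance to `z` are less than `2 * r`. -/
def OscLEBarrier (v : E → ℝ) (z : E) (c A r ε θ : ℝ) : Prop :=
  ∀ s y, 0 < s → s < 2 * r → y ∈ ball z (2 * r) →
    OscLE v (ball y s) (oscBarrier c A r ε s (y - z) + θ)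

theorem OscLEBarrier.of_abs_le (hc : 0 ≤ c) (hA : 0 ≤ A) (hε : 0 ≤ ε) (hεr : ε ≤ r)
    (hv : ∀ x, |v x| ≤ M) : OscLEBarrier v z c A r ε (2 * M) := fun s y hs hsr _ x hx x' hx' =>
  (OscLE.of_abs_le hv _ x hx x' hx').trans
    (le_add_of_nonneg_left (oscBarrier_nonneg hc hA (by linarith) (by linarith)))

variable [InnerProductSpace ℝ E]

theorem oscBarrier_add_right :
    oscBarrier c A r ε s (Z + h)
      = oscBarrier c A r ε s Z + c * ‖h‖ ^ 2 + ((2 * c) • innerSL ℝ Z) h := by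
  simp only [oscBarrier, norm_add_sq_real, smul_apply, innerSL_apply_apply, smul_eq_mul]
  ring

namespace OscLEBarrier

theorem translate_sub_le (h : OscLEBarrier v z c A r ε θ) (hc : 0 ≤ c) (hεr : ε ≤ r)
    (hs : 0 < s) (hsr : s < 2 * r) (hy : y ∈ ball z r) {x x' : E} (hx : x ∈ ball y s)
    (hx' : x' ∈ ball y s) {e : E} (he : e ∈ ball 0 ε) :
    v (x + e) - v (x' + e) ≤ oscBarrier c A r ε s (y - z) + θ + c * ε ^ 2
      + ((2 * c) • innerSL ℝ (y - z)) e := by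
  rw [mem_ball_zero_iff] at he
  have hye : y + e ∈ ball z (2 * r) := by
    rw [mem_ball_iff_norm] at hy ⊢
    rw [add_sub_right_comm]
    linarith [norm_add_le (y - z) e]
  have hsub := h s (y + e) hs hsr hye (x + e) (by simpa using hx) (x' + e) (by simpa using hx')
  rw [add_sub_right_comm, oscBarrier_add_right] at hsub
  have hsq : c * ‖e‖ ^ 2 ≤ c * ε ^ 2 := by gcongr
  linarith

theorem tugOfWarSum_sub_le (h : OscLEBarrier v z c A r ε θ) (hv : ∀ x, |v x| ≤ M) (hc : 0 ≤ c)
    (hA : 0 ≤ A) (hθ : 0 ≤ θ) (hεr : ε ≤ r) (hs : 0 < s) (hsr : s < r)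
    (hy : y ∈ ball z (2 * r)) {x x' : E} (hx : x ∈ ball y s) (hx' : x' ∈ ball y s)
    (ht : t ∈ Ioo 0 ε) :
    tugOfWarSum v x t - tugOfWarSum v x' t
      ≤ 2 * (oscBarrier c A r ε s (y - z) + θ - c * A * t ^ 2) := by
  obtain ⟨ht₀, htε⟩ := ht
  have hnonneg : 0 ≤ oscBarrier c A r ε (s - t) (y - z) :=
    oscBarrier_nonneg hc hA (by linarith) (by linarith)
  have hsub := tugOfWarSum_sub_le_add_of_oscLE hv ht₀ hx hx' (add_nonneg hnonneg hθ)
    (h (s + t) y (by linarith) (by linarith) hy)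
    (fun a ha => h (s - t) y (pos_of_mem_ball ha) (by linarith) hy a ha)
  linarith [oscBarrier_add_add_oscBarrier_sub (c := c) (A := A) (r := r) (ε := ε) (s := s) (t := t)
    (Z := y - z)]

variable [FiniteDimensional ℝ E] [MeasurableSpace E] [BorelSpace E] {μ : Measure E}
  [μ.IsAddHaarMeasure] {α β : ℝ}

/-- With `A = 3 / α` the tug-of-war gain `α * c * A * ε ^ 2 / 3` is `c * ε ^ 2`, which beats the
cost `β * c * ε ^ 2` of the noise. -/
theorem max_sub_of_satisfiesDPPAt (h : OscLEBarrier v z c (3 / α) r ε θ) (hε : 0 < ε)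
    (hεr : ε < r) (hα : 0 < α) (hβ : 0 ≤ β) (hαβ : α + β = 1) (hc : 0 ≤ c) (hcM : 2 * M ≤ c * r ^ 2)
    (hvm : AEStronglyMeasurable v μ) (hv : ∀ x, |v x| ≤ M)
    (hdpp : ∀ x ∈ ball z (2 * r), SatisfiesDPPAt μ α β ε v x) (hθ : 0 ≤ θ) :
    OscLEBarrier v z c (3 / α) r ε (max (θ - α * c * ε ^ 2) 0) := by
  intro s y hs hsr hy x hx x' hx'
  by_cases hfar : r ≤ s + ε ∨ r ≤ ‖y - z‖
  · have hA : 1 ≤ 3 / α := (one_le_div hα).2 (by linarith)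
    have hbar := mul_sq_le_oscBarrier hc hA (hε.trans hεr).le (by linarith) (by linarith) hfar
    linarith [OscLE.of_abs_le hv _ x hx x' hx', le_max_right (θ - α * c * ε ^ 2) 0]
  push Not at hfar
  have hyr : y ∈ ball z r := mem_ball_iff_norm.2 hfar.2
  have hsub : ball y s ⊆ ball z (2 * r) := ball_subset_ball' (by linarith [mem_ball.1 hyr])
  set F := oscBarrier c (3 / α) r ε s (y - z)
  have hstep : v x - v x'
      ≤ α * (F + θ - c * (3 / α) * ε ^ 2 / 3) + β * (F + θ + c * ε ^ 2) :=
    (hdpp x (hsub hx)).sub_le_of_translate hε hα.le hβ hvm hv (hdpp x' (hsub hx')) _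
      (fun e he => h.translate_sub_le hc hεr.le hs hsr hyr hx hx' he)
      (fun t ht => h.tugOfWarSum_sub_le hv hc (by positivity) hθ hεr.le hs (by linarith) hy
        hx hx' ht)
  have hgain : α * (F + θ - c * (3 / α) * ε ^ 2 / 3) + β * (F + θ + c * ε ^ 2)
      = F + (θ - α * c * ε ^ 2) := by
    rw [eq_sub_of_add_eq' hαβ]
    field_simp
    ring
  linarith [le_max_left (θ - α * c * ε ^ 2) 0]

end OscLEBarrier

end Barrier

section Lipschitz

variable {E : Type*} [NormedAddCommGroup E] [InnerProductSpace ℝ E] [FiniteDimensional ℝ E]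
  [MeasurableSpace E] [BorelSpace E] {μ : Measure E} [μ.IsAddHaarMeasure] {v : E → ℝ}
  {M α β ε r : ℝ}

theorem oscLE_ball_of_satisfiesDPPAt {z : E} {s : ℝ} (hε : 0 < ε) (hεr : ε < r) (hα : 0 < α)
    (hβ : 0 ≤ β) (hαβ : α + β = 1) (hvm : AEStronglyMeasurable v μ) (hv : ∀ x, |v x| ≤ M)
    (hdpp : ∀ x ∈ ball z (2 * r), SatisfiesDPPAt μ α β ε v x) (hs : 0 < s) (hsr : s < 2 * r) :
    OscLE v (ball z s) (36 * M / (α * r) * (s + ε)) := by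
  have hr : 0 < r := hε.trans hεr
  rcases ((abs_nonneg _).trans (hv z)).eq_or_lt with rfl | hM
  · simpa using OscLE.of_abs_le hv (ball z s)
  set c := 2 * M / r ^ 2 with hc
  have hcM : 2 * M = c * r ^ 2 := by rw [hc]; field_simp
  have hbar : OscLEBarrier v z c (3 / α) r ε 0 :=
    zero_of_forall_max_sub (by positivity : 0 < α * c * ε ^ 2) (by positivity)
      (OscLEBarrier.of_abs_le (by positivity) (by positivity) hε.le hεr.le hv)
      fun θ hθ h =>
        h.max_sub_of_satisfiesDPPAt hε hεr hα hβ hαβ (by positivity) hcM.le hvm hv hdpp hθ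
  intro x hx x' hx'
  calc v x - v x' ≤ oscBarrier c (3 / α) r ε s (z - z) + 0 :=
        hbar s z hs hsr (mem_ball_self (by positivity)) x hx x' hx'
    _ = 36 * M / (α * r) * (s + ε) - c * (3 / α) * (s + ε) ^ 2 := by
        simp only [oscBarrier, sub_self, norm_zero, hc]
        field_simp
        ring
    _ ≤ 36 * M / (α * r) * (s + ε) := sub_le_self _ (by positivity)

theorem sub_le_mul_dist_of_satisfiesDPPAt {z₀ : E} (hε : 0 < ε) (hεr : ε < r) (hα : 0 < α)
    (hβ : 0 ≤ β) (hαβ : α + β = 1) (hvm : AEStronglyMeasurable v μ) (hv : ∀ x, |v x| ≤ M)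
    (hdpp : ∀ x ∈ ball z₀ (3 * r), SatisfiesDPPAt μ α β ε v x) {x y : E} (hx : x ∈ ball z₀ r)
    (hy : y ∈ ball z₀ r) :
    v x - v y ≤ 108 * (Module.finrank ℝ E + 1) * M / (α * r) * dist x y := by
  have hr : 0 < r := hε.trans hεr
  have hM : 0 ≤ M := (abs_nonneg _).trans (hv x)
  obtain ⟨N, hN⟩ : ∃ N : ℝ, N = Module.finrank ℝ E := ⟨_, rfl⟩
  have hN₀ : 0 ≤ N := by rw [hN]; positivity
  set K := 36 * M / (α * r) with hK
  have : 0 ≤ K := by positivity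
  have hosc : ∀ s, 0 < s → s < 2 * r → OscLE v (ball y s) (K * (s + ε)) := fun s =>
    oscLE_ball_of_satisfiesDPPAt hε hεr hα hβ hαβ hvm hv
      fun w hw => hdpp w (ball_subset_ball' (by linarith [mem_ball.1 hy]) hw)
  have hC : 108 * (Module.finrank ℝ E + 1) * M / (α * r) = 3 * (N + 1) * K := by rw [hN]; ring
  have hKC : 3 * K ≤ 3 * (N + 1) * K := by gcongr; linarith
  rw [hC]
  rcases lt_or_ge (dist x y) ε with hnear | hdε
  · have hsub : ball z₀ r ⊆ ball z₀ (3 * r) := ball_subset_ball (by linarith)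
    calc v x - v y ≤ (α + β * N) * (K * (2 * ε + ε)) / ε * dist x y :=
          hN ▸ (hdpp x (hsub hx)).sub_le_of_dist_lt hα.le hβ hvm hv (hdpp y (hsub hy)) hnear
            (hosc (2 * ε) (by positivity) (by linarith))
      _ = 3 * (α + β * N) * K * dist x y := by field_simp; ring
      _ ≤ 3 * (N + 1) * K * dist x y := by
          gcongr ?_ * K * dist x y
          nlinarith
  suffices v x - v y ≤ 3 * K * dist x y from this.trans (by gcongr)
  rcases lt_or_ge (dist x y) r with hdr | hfar
  · have hd : 0 < dist x y := hε.trans_le hdε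
    calc v x - v y ≤ K * (2 * dist x y + ε) :=
          hosc (2 * dist x y) (by positivity) (by linarith) x (mem_ball.2 (by linarith)) y
            (mem_ball_self (by positivity))
      _ ≤ K * (2 * dist x y + dist x y) := by gcongr
      _ = 3 * K * dist x y := by ring
  · calc v x - v y ≤ 2 * M := OscLE.of_abs_le hv univ x trivial y trivial
      _ ≤ 3 * K * r := by
          have hKr : K * r * α = 36 * M := by rw [hK]; field_simp
          have : K * r * α ≤ K * r := mul_le_of_le_one_right (by positivity) (by linarith)
          linarith
      _ ≤ 3 * K * dist x y := by gcongr

theorem lipschitzOnWith_of_satisfiesDPPAt {u : E → ℝ} {z₀ : E} (hε : 0 < ε) (hεr : ε < r)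
    (hα : 0 < α) (hβ : 0 ≤ β) (hαβ : α + β = 1)
    (hum : AEStronglyMeasurable u (μ.restrict (ball z₀ (4 * r))))
    (hu : ∀ x ∈ ball z₀ (4 * r), |u x| ≤ M)
    (hdpp : ∀ x ∈ ball z₀ (3 * r), SatisfiesDPPAt μ α β ε u x) :
    LipschitzOnWith (108 * (Module.finrank ℝ E + 1) * M / (α * r)).toNNReal u (ball z₀ r) := by
  have hr : 0 < r := hε.trans hεr
  have hM : 0 ≤ M := (abs_nonneg _).trans (hu z₀ (mem_ball_self (by positivity)))
  set v := (ball z₀ (4 * r)).indicator u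
  have huv : EqOn u v (ball z₀ (4 * r)) := eqOn_indicator.symm
  have hvm : AEStronglyMeasurable v μ :=
    (aestronglyMeasurable_indicator_iff measurableSet_ball).2 hum
  have hv : ∀ x, |v x| ≤ M := fun x => by
    by_cases hx : x ∈ ball z₀ (4 * r)
    · exact huv hx ▸ hu x hx
    · simpa [v, indicator_of_notMem hx] using hM
  have hvdpp : ∀ x ∈ ball z₀ (3 * r), SatisfiesDPPAt μ α β ε v x := fun x hx =>
    (hdpp x hx).congr hε (huv.mono (ball_subset_ball' (by linarith [mem_ball.1 hx])))
  refine LipschitzOnWith.of_le_add_mul _ fun x hx y hy => ?_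
  have hsub : ball z₀ r ⊆ ball z₀ (4 * r) := ball_subset_ball (by linarith)
  rw [Real.coe_toNNReal _ (by positivity), huv (hsub hx), huv (hsub hy), ← sub_le_iff_le_add']
  exact sub_le_mul_dist_of_satisfiesDPPAt hε hεr hα hβ hαβ hvm hv hvdpp hx hy

end Lipschitz

theorem ae_differentiableAt_and_norm_fderiv_le_of_lipschitzOnWith {E F : Type*}
    [NormedAddCommGroup E] [NormedSpace ℝ E] [FiniteDimensional ℝ E] [MeasurableSpace E]
    [BorelSpace E] {μ : Measure E} [μ.IsAddHaarMeasure] [NormedAddCommGroup F] [NormedSpace ℝ F]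
    [FiniteDimensional ℝ F] {C : NNReal} {f : E → F} {s : Set E} (hf : LipschitzOnWith C f s)
    (hs : IsOpen s) : ∀ᵐ z ∂μ.restrict s, DifferentiableAt ℝ f z ∧ ‖fderiv ℝ f z‖ ≤ C := by
  filter_upwards [hf.ae_differentiableWithinAt hs.measurableSet,
    ae_restrict_mem hs.measurableSet] with z hz hzs
  exact ⟨hz.differentiableAt (hs.mem_nhds hzs),
    norm_fderiv_le_of_lipschitzOn ℝ (hs.mem_nhds hzs) hf⟩

theorem gradient_exists_and_bounded_general {E : Type*} [NormedAddCommGroup E]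
    [InnerProductSpace ℝ E] [FiniteDimensional ℝ E] [MeasurableSpace E] [BorelSpace E]
    {μ : Measure E} [μ.IsAddHaarMeasure] {α β ε r M : ℝ} {u : E → ℝ} {z₀ : E} (hα : 0 < α)
    (hβ : 0 ≤ β) (hαβ : α + β = 1) (hε : 0 < ε) (hεr : ε < r)
    (hum : AEStronglyMeasurable u (μ.restrict (ball z₀ (4 * r))))
    (hu : ∀ x ∈ ball z₀ (4 * r), |u x| ≤ M)
    (hdpp : ∀ x ∈ ball z₀ (3 * r), SatisfiesDPPAt μ α β ε u x) :
    ∀ᵐ z ∂μ.restrict (ball z₀ r), DifferentiableAt ℝ u z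
      ∧ ‖fderiv ℝ u z‖ ≤ 108 * (Module.finrank ℝ E + 1) * M / (α * r) := by
  have hr : 0 < r := hε.trans hεr
  have hM : 0 ≤ M := (abs_nonneg _).trans (hu z₀ (mem_ball_self (by positivity)))
  simpa only [Real.coe_toNNReal _ (by positivity :
      0 ≤ 108 * (Module.finrank ℝ E + 1) * M / (α * r))] using
    ae_differentiableAt_and_norm_fderiv_le_of_lipschitzOnWith (μ := μ)
      (lipschitzOnWith_of_satisfiesDPPAt hε hεr hα hβ hαβ hum hu hdpp) isOpen_ball

/-- **Existence and bound of the gradient (Theorem 3.2, second part).** For every `p > 2`,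
integer `n ≥ 2`, `r > 0` and `M ≥ 0` there exists `C > 0` depending only on `p, n, r, M`
such that: whenever `ε ∈ (0,1)` with `ε < r` and `u` is a bounded Borel function on `Ω_ε`
with `sup_{Ω_ε}|u| ≤ M` satisfying the DPP at every point of `Ω`, then for every `z₀`
with `B_{5r}(z₀) ⊆ Ω`, `u` is differentiable at Lebesgue-almost every point of `B_r(z₀)`
and its gradient satisfies `|Du(z)| ≤ C` for a.e. `z ∈ B_r(z₀)`. -/
theorem gradient_exists_and_bounded (n : ℕ) (hn : 2 ≤ n) (p r M : ℝ)
    (hp : 2 < p) (hr : 0 < r) (hM : 0 ≤ M) :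
    ∃ C : ℝ, 0 < C ∧
      ∀ (Ω : Set (EuclideanSpace ℝ (Fin n))),
        IsOpen Ω → IsConnected Ω → Bornology.IsBounded Ω →
      ∀ ε : ℝ, ε ∈ Set.Ioo (0 : ℝ) 1 → ε < r →
      ∀ u : EuclideanSpace ℝ (Fin n) → ℝ,
        Measurable u →
        (∀ x ∈ Ω ∪ {x | x ∉ Ω ∧ Metric.infDist x (frontier Ω) ≤ ε}, |u x| ≤ M) →
        (∀ x ∈ Ω, u x =
          ((p - 2) / (n + p)) / (2 * ε) *
              (∫ t in (0 : ℝ)..ε, (sSup (u '' Metric.ball x t) + sInf (u '' Metric.ball x t)))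
            + ((n + 2) / (n + p)) * ⨍ z in Metric.ball x ε, u z) →
      ∀ z₀ : EuclideanSpace ℝ (Fin n), Metric.ball z₀ (5 * r) ⊆ Ω →
        ∀ᵐ z ∂(volume.restrict (Metric.ball z₀ r)),
          DifferentiableAt ℝ u z ∧ ‖fderiv ℝ u z‖ ≤ C := by
  have hnp : 0 < (n : ℝ) + p := by positivity
  have hα : 0 < (p - 2) / (n + p) := div_pos (sub_pos.2 hp) hnp
  have hβ : 0 ≤ ((n : ℝ) + 2) / (n + p) := by positivity
  have hαβ : (p - 2) / (n + p) + ((n : ℝ) + 2) / (n + p) = 1 := by field_simp; ring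
  refine ⟨108 * (n + 1) * M / ((p - 2) / (n + p) * r) + 1, by positivity, ?_⟩
  intro Ω _ _ _ ε hε hεr u hum huM hdpp z₀ hz₀
  have hsub : ∀ k ≤ (5 : ℝ), ball z₀ (k * r) ⊆ Ω := fun k hk =>
    (ball_subset_ball (by gcongr)).trans hz₀
  filter_upwards [gradient_exists_and_bounded_general (μ := volume) hα hβ hαβ hε.1 hεr
    hum.aestronglyMeasurable (fun x hx => huM x (Or.inl (hsub 4 (by norm_num) hx)))
    (fun x hx => hdpp x (hsub 3 (by norm_num) hx))] with z hz
  rw [finrank_euclideanSpace_fin] at hz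
  exact ⟨hz.1, hz.2.trans (lt_add_one _).le⟩
end

section
/- Comparison with planes (Lemma 4.1): let ν ∈ ℝⁿ, b ∈ ℝ, δ > 0, and let F : Γ_ε → ℝ be a bounded Borel function with |F(x) − ν·x − b| ≤ δ for all x ∈ Γ_ε. If u is a bounded Borel function on Ω_ε satisfying the DPP at every point of Ω with u = F on Γ_ε, then for every x ∈ Ω_ε: ν·x − δ + b ≤ u(x) ≤ ν·x + δ + b. -/
open MeasureTheory Metric Set
open scoped RealInnerProductSpace

/-!
The plane `P` is a fixed point of the operator `T` on the right-hand side of the DPP: both the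
midrange over a ball and the average over a ball are preserved by the reflection in the centre. Let
`u ≤ T u` with `u ≤ P + a` on the strip, and let `M` be the supremum of `u - P`. If `M > a`, then
the deficit `m = P + M - u ≥ 0` satisfies `m ≥ β ⨍ m` in `Ω` and `m ≥ M - a > 0` on the strip. Every
ball of radius `ε` contains a ball of radius `ε / 4` whose points all exceed the centre of the large
ball in norm by more than `ε / 2`. So a positive lower bound for `m` propagates inward from outside
the bounded set `Ω`, losing a fixed factor at each of finitely many steps, and `inf m > 0`
contradicts the choice of `M`. The lower bound for `u` is the upper bound for `-u`.
-/

section BoundaryStrip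

/-- The outer boundary strip `Γ_ε` of `Ω`, of width `ε`. -/
def outerStrip {X : Type*} [PseudoMetricSpace X] (Ω : Set X) (ε : ℝ) : Set X :=
  {x | x ∉ Ω ∧ infDist x (frontier Ω) ≤ ε}

lemma inter_frontier_nonempty_of_isPreconnected {X : Type*} [TopologicalSpace X] {s t : Set X}
    (ht : IsPreconnected t) (hts : (t ∩ s).Nonempty) (htsc : (t ∩ sᶜ).Nonempty) :
    (t ∩ frontier s).Nonempty := by
  by_contra! hempty
  have hcover : t ⊆ interior s ∪ interior sᶜ := by
    rw [← compl_frontier_eq_union_interior]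
    exact (disjoint_iff_inter_eq_empty.2 hempty).subset_compl_right
  obtain ⟨x, hxt, hxs⟩ := hts
  obtain ⟨y, hyt, hys⟩ := htsc
  obtain ⟨z, -, hz, hz'⟩ := ht _ _ isOpen_interior isOpen_interior hcover
    ⟨x, hxt, (hcover hxt).resolve_right fun h => interior_subset h hxs⟩
    ⟨y, hyt, (hcover hyt).resolve_left fun h => hys (interior_subset h)⟩
  exact interior_subset hz' (interior_subset hz)

lemma ball_subset_union_outerStrip {E : Type*} [SeminormedAddCommGroup E] [NormedSpace ℝ E]
    {Ω : Set E} {ε : ℝ} {x : E} (hx : x ∈ Ω) : ball x ε ⊆ Ω ∪ outerStrip Ω ε := by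
  intro y hy
  by_cases hyΩ : y ∈ Ω
  · exact .inl hyΩ
  have hyball : y ∈ ball y ε := mem_ball_self (pos_of_mem_ball hy)
  obtain ⟨z, hz, hzΩ⟩ := inter_frontier_nonempty_of_isPreconnected
    (convex_ball y ε).isPreconnected ⟨x, mem_ball_comm.1 hy, hx⟩ ⟨y, hyball, hyΩ⟩
  exact .inr ⟨hyΩ, (infDist_le_dist_of_mem hzΩ).trans (mem_ball'.1 hz).le⟩

end BoundaryStrip

section Midrange

lemma abs_csSup_le {s : Set ℝ} {C : ℝ} (hs : s.Nonempty) (hC : ∀ a ∈ s, |a| ≤ C) :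
    |sSup s| ≤ C := by
  have hle : ∀ a ∈ s, a ≤ C := fun a ha => (abs_le.1 (hC a ha)).2
  obtain ⟨a, ha⟩ := hs
  exact abs_le.2 ⟨(abs_le.1 (hC a ha)).1.trans (le_csSup ⟨C, hle⟩ ha), csSup_le ⟨a, ha⟩ hle⟩

lemma neg_image {X G : Type*} [InvolutiveNeg G] (f : X → G) (s : Set X) :
    (-f) '' s = -(f '' s) := by
  rw [← image_neg_eq_neg, image_image]
  rfl

lemma sInf_image_eq_neg_sSup_image_neg_s8 {X : Type*} (f : X → ℝ) (s : Set X) :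
    sInf (f '' s) = -sSup ((-f) '' s) := by
  rw [neg_image, Real.sInf_def]

section Integrability

variable {X : Type*} [PseudoMetricSpace X] {f : X → ℝ} {x : X} {r C : ℝ}

lemma intervalIntegrable_sSup_image_ball_s8 (hr : 0 ≤ r) (hC : ∀ y ∈ ball x r, |f y| ≤ C) :
    IntervalIntegrable (fun t => sSup (f '' ball x t)) volume 0 r := by
  have hCt : ∀ t ∈ Ioc 0 r, ∀ a ∈ f '' ball x t, |a| ≤ C := by
    rintro t ht _ ⟨y, hy, rfl⟩
    exact hC y (ball_subset_ball ht.2 hy)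
  have hne : ∀ t ∈ Ioc 0 r, (f '' ball x t).Nonempty := fun t ht => (nonempty_ball.2 ht.1).image f
  have hmono : MonotoneOn (fun t => sSup (f '' ball x t)) (Ioc 0 r) := fun s hs t ht hst =>
    csSup_le_csSup ⟨C, fun a ha => (abs_le.1 (hCt t ht a ha)).2⟩ (hne s hs)
      (image_mono (ball_subset_ball hst))
  rw [intervalIntegrable_iff_integrableOn_Ioc_of_le hr]
  exact IntegrableOn.of_bound measure_Ioc_lt_top
    (aemeasurable_restrict_of_monotoneOn measurableSet_Ioc hmono).aestronglyMeasurable C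
    (ae_restrict_of_forall_mem measurableSet_Ioc fun t ht => abs_csSup_le (hne t ht) (hCt t ht))

lemma intervalIntegrable_sInf_image_ball_s8 (hr : 0 ≤ r) (hC : ∀ y ∈ ball x r, |f y| ≤ C) :
    IntervalIntegrable (fun t => sInf (f '' ball x t)) volume 0 r := by
  simp only [sInf_image_eq_neg_sSup_image_neg_s8]
  exact (intervalIntegrable_sSup_image_ball_s8 hr fun y hy => (abs_neg (f y)).trans_le (hC y hy)).neg

end Integrability

variable {E : Type*} [SeminormedAddCommGroup E] {f : E → ℝ} {x y : E} {r c C : ℝ}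

lemma add_self_sub_mem_ball_iff : x + x - y ∈ ball x r ↔ y ∈ ball x r := by
  rw [mem_ball_iff_norm, mem_ball_iff_norm', add_sub_assoc, add_sub_cancel_left]

lemma sSup_add_sInf_image_ball_le (hr : 0 < r) (hbdd : BddBelow (f '' ball x r))
    (hc : ∀ y ∈ ball x r, f y + f (x + x - y) ≤ c) :
    sSup (f '' ball x r) + sInf (f '' ball x r) ≤ c := by
  rw [← le_sub_iff_add_le]
  refine csSup_le ((nonempty_ball.2 hr).image f) ?_
  rintro _ ⟨y, hy, rfl⟩
  have hinf : sInf (f '' ball x r) ≤ f (x + x - y) :=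
    csInf_le hbdd (mem_image_of_mem f (add_self_sub_mem_ball_iff.2 hy))
  linarith [hc y hy]

lemma integral_sSup_add_sInf_image_ball_le (hr : 0 ≤ r) (hC : ∀ y ∈ ball x r, |f y| ≤ C)
    (hc : ∀ y ∈ ball x r, f y + f (x + x - y) ≤ c) :
    ∫ t in (0 : ℝ)..r, (sSup (f '' ball x t) + sInf (f '' ball x t)) ≤ r * c := by
  have hpoint : ∀ t ∈ Ioo 0 r, sSup (f '' ball x t) + sInf (f '' ball x t) ≤ c := by
    intro t ht
    have hsub : ball x t ⊆ ball x r := ball_subset_ball ht.2.le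
    refine sSup_add_sInf_image_ball_le ht.1 ⟨-C, ?_⟩ fun y hy => hc y (hsub hy)
    rintro _ ⟨y, hy, rfl⟩
    exact (abs_le.1 (hC y (hsub hy))).1
  calc ∫ t in (0 : ℝ)..r, (sSup (f '' ball x t) + sInf (f '' ball x t))
      ≤ ∫ _ in (0 : ℝ)..r, c :=
        intervalIntegral.integral_mono_on_of_le_Ioo hr
          ((intervalIntegrable_sSup_image_ball_s8 hr hC).add
            (intervalIntegrable_sInf_image_ball_s8 hr hC)) intervalIntegrable_const hpoint
    _ = r * c := by rw [intervalIntegral.integral_const, sub_zero, smul_eq_mul]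

end Midrange

section BallIntegrability

variable {X : Type*} [PseudoMetricSpace X] [ProperSpace X] [MeasurableSpace X]
  [OpensMeasurableSpace X] {μ : Measure X} [IsFiniteMeasureOnCompacts μ] {x : X} {r : ℝ}

lemma integrableOn_ball_of_forall_abs_le {f : X → ℝ} {C : ℝ}
    (hf : AEStronglyMeasurable f (μ.restrict (ball x r))) (hC : ∀ y ∈ ball x r, |f y| ≤ C) :
    IntegrableOn f (ball x r) μ :=
  IntegrableOn.of_bound measure_ball_lt_top hf C (ae_restrict_of_forall_mem measurableSet_ball hC)

lemma integrableOn_ball_of_continuous {F : Type*} [NormedAddCommGroup F] {f : X → F}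
    (hf : Continuous f) : IntegrableOn f (ball x r) μ :=
  (hf.locallyIntegrable.integrableOn_isCompact (isCompact_closedBall x r)).mono_set
    ball_subset_closedBall

end BallIntegrability

section MeanValue

lemma setAverage_ball_comp_add_self_sub {E F : Type*} [SeminormedAddCommGroup E]
    [MeasurableSpace E] [MeasurableAdd E] [MeasurableNeg E] {μ : Measure E}
    [μ.IsAddLeftInvariant] [μ.IsNegInvariant] [NormedAddCommGroup F] [NormedSpace ℝ F]
    (f : E → F) (x : E) (r : ℝ) :
    ⨍ z in ball x r, f (x + x - z) ∂μ = ⨍ z in ball x r, f z ∂μ := by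
  have hpre : (fun z => x + x - z) ⁻¹' ball x r = ball x r :=
    Set.ext fun _ => add_self_sub_mem_ball_iff
  have hrefl := (Measure.measurePreserving_sub_left μ (x + x)).setIntegral_preimage_emb
    (MeasurableEquiv.subLeft (x + x)).measurableEmbedding f (ball x r)
  rw [hpre] at hrefl
  rw [setAverage_eq, setAverage_eq, hrefl]

variable {E : Type*} [NormedAddCommGroup E] [NormedSpace ℝ E] [FiniteDimensional ℝ E]
  [MeasurableSpace E] [BorelSpace E] {μ : Measure E} [μ.IsAddHaarMeasure] {x y : E} {r R : ℝ}

lemma setAverage_ball_clm {F : Type*} [NormedAddCommGroup F] [NormedSpace ℝ F] [CompleteSpace F]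
    (L : E →L[ℝ] F) (hr : 0 < r) : ⨍ z in ball x r, L z ∂μ = L x := by
  have hconst : IntegrableOn (fun _ => L (x + x)) (ball x r) μ :=
    integrableOn_const measure_ball_lt_top.ne
  have hrefl : ⨍ z in ball x r, L z ∂μ = L (x + x) - ⨍ z in ball x r, L z ∂μ :=
    calc ⨍ z in ball x r, L z ∂μ
        = ⨍ z in ball x r, (L (x + x) - L z) ∂μ := by
          rw [← setAverage_ball_comp_add_self_sub L x r]
          simp only [map_sub]
      _ = ⨍ _ in ball x r, L (x + x) ∂μ - ⨍ z in ball x r, L z ∂μ :=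
          integral_sub (Integrable.to_average hconst)
            (Integrable.to_average (integrableOn_ball_of_continuous L.continuous))
      _ = L (x + x) - ⨍ z in ball x r, L z ∂μ := by
          rw [setAverage_const (measure_ball_pos μ x hr).ne' measure_ball_lt_top.ne]
  rw [eq_sub_iff_add_eq, map_add, ← two_smul ℝ, ← two_smul ℝ] at hrefl
  exact smul_right_injective F two_ne_zero hrefl

lemma pow_finrank_mul_le_setAverage_ball {f : E → ℝ} {c : ℝ} (hr : 0 < r)
    (hsub : ball y r ⊆ ball x R) (hint : IntegrableOn f (ball x R) μ)
    (hnonneg : ∀ z ∈ ball x R, 0 ≤ f z) (hc : ∀ z ∈ ball y r, c ≤ f z) :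
    (r / R) ^ Module.finrank ℝ E * c ≤ ⨍ z in ball x R, f z ∂μ := by
  have hR : 0 < R := nonempty_ball.1 ((nonempty_ball.2 hr).mono hsub)
  have hpos : 0 < μ.real (ball x R) :=
    ENNReal.toReal_pos (measure_ball_pos μ x hR).ne' measure_ball_lt_top.ne
  have hvol : (r / R) ^ Module.finrank ℝ E * μ.real (ball x R) = μ.real (ball y r) := by
    simp only [Measure.real, Measure.addHaar_ball_of_pos μ _ hR,
      Measure.addHaar_ball_of_pos μ _ hr,
      ENNReal.toReal_mul, ENNReal.toReal_ofReal (pow_nonneg hR.le _),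
      ENNReal.toReal_ofReal (pow_nonneg hr.le _), div_pow]
    field_simp
  rw [setAverage_eq, smul_eq_mul, inv_mul_eq_div, le_div_iff₀ hpos]
  calc (r / R) ^ Module.finrank ℝ E * c * μ.real (ball x R)
      = c * μ.real (ball y r) := by rw [← hvol]; ring
    _ ≤ ∫ z in ball y r, f z ∂μ :=
        setIntegral_ge_of_const_le_real measurableSet_ball measure_ball_lt_top.ne hc
          (hint.mono_set hsub)
    _ ≤ ∫ z in ball x R, f z ∂μ :=
        setIntegral_mono_set hint (ae_restrict_of_forall_mem measurableSet_ball hnonneg)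
          hsub.eventuallyLE

end MeanValue

section MinimumPrinciple

variable {E : Type*} [NormedAddCommGroup E] [NormedSpace ℝ E] [Nontrivial E]

lemma exists_norm_eq_one_and_norm_smul_eq (x : E) : ∃ e : E, ‖e‖ = 1 ∧ ‖x‖ • e = x := by
  rcases eq_or_ne x 0 with rfl | hx
  · obtain ⟨e, he⟩ := exists_norm_eq E zero_le_one
    exact ⟨e, he, by rw [norm_zero, zero_smul]⟩
  · exact ⟨‖x‖⁻¹ • x, norm_smul_inv_norm hx, smul_inv_smul₀ (norm_ne_zero_iff.2 hx) x⟩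

lemma exists_ball_subset_ball_forall_lt_norm (x : E) {r : ℝ} (hr : 0 ≤ r) :
    ∃ y, ball y (r / 4) ⊆ ball x r ∧ ∀ z ∈ ball y (r / 4), ‖x‖ + r / 2 < ‖z‖ := by
  obtain ⟨e, he, hxe⟩ := exists_norm_eq_one_and_norm_smul_eq x
  set y : E := x + (3 * r / 4) • e with hy
  have hdist : dist y x = 3 * r / 4 := by
    rw [hy, dist_eq_norm, add_sub_cancel_left, norm_smul, he, mul_one,
      Real.norm_of_nonneg (by positivity)]
  have hnorm : ‖y‖ = ‖x‖ + 3 * r / 4 := by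
    rw [hy]
    nth_rw 1 [← hxe]
    rw [← add_smul, norm_smul, he, mul_one, Real.norm_of_nonneg (by positivity)]
  refine ⟨y, ball_subset_ball' (by rw [hdist]; linarith), fun z hz => ?_⟩
  have hyz : ‖y‖ - ‖z‖ < r / 4 := (norm_sub_norm_le y z).trans_lt (mem_ball_iff_norm'.1 hz)
  linarith

variable [FiniteDimensional ℝ E] [MeasurableSpace E] [BorelSpace E] {μ : Measure E}
  [μ.IsAddHaarMeasure] {m : E → ℝ} {ε c : ℝ}

lemma pow_finrank_mul_le_setAverage_ball_of_forall_lt_norm {x : E} (hε : 0 < ε)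
    (hint : IntegrableOn m (ball x ε) μ) (hnonneg : ∀ z ∈ ball x ε, 0 ≤ m z)
    (hc : ∀ z ∈ ball x ε, ‖x‖ + ε / 2 < ‖z‖ → c ≤ m z) :
    (1 / 4 : ℝ) ^ Module.finrank ℝ E * c ≤ ⨍ z in ball x ε, m z ∂μ := by
  obtain ⟨y, hsub, hlt⟩ := exists_ball_subset_ball_forall_lt_norm x hε.le
  have hratio : ε / 4 / ε = 1 / 4 := by field_simp
  rw [← hratio]
  exact pow_finrank_mul_le_setAverage_ball (by positivity) hsub hint hnonneg
    fun z hz => hc z (hsub hz) (hlt z hz)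

lemma exists_pos_le_of_mul_setAverage_le {Ω Γ : Set E} (hΩ : Bornology.IsBounded Ω) {β : ℝ}
    (hε : 0 < ε) (hβ : 0 < β) (hβ1 : β ≤ 1) (hc : 0 < c)
    (hball : ∀ x ∈ Ω, ball x ε ⊆ Ω ∪ Γ) (hint : ∀ x ∈ Ω, IntegrableOn m (ball x ε) μ)
    (hnonneg : ∀ x ∈ Ω ∪ Γ, 0 ≤ m x) (hΓ : ∀ x ∈ Γ, c ≤ m x)
    (hmean : ∀ x ∈ Ω, β * ⨍ z in ball x ε, m z ∂μ ≤ m x) :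
    ∃ κ > 0, ∀ x ∈ Ω ∪ Γ, κ ≤ m x := by
  obtain ⟨R, hR⟩ := hΩ.exists_norm_le
  set q : ℝ := β * (1 / 4) ^ Module.finrank ℝ E with hq
  have hq0 : 0 < q := by positivity
  have hq1 : q ≤ 1 :=
    mul_le_one₀ hβ1 (by positivity) (pow_le_one₀ (by norm_num) (by norm_num))
  have hΓpow : ∀ k, ∀ x ∈ Γ, q ^ k * c ≤ m x := fun k x hx =>
    (mul_le_of_le_one_left hc.le (pow_le_one₀ hq0.le hq1)).trans (hΓ x hx)
  have hlayer : ∀ k : ℕ, ∀ x ∈ Ω, R - k * (ε / 2) < ‖x‖ → q ^ k * c ≤ m x := by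
    intro k
    induction k with
    | zero =>
      intro x hx hlt
      rw [Nat.cast_zero, zero_mul, sub_zero] at hlt
      exact absurd (hR x hx) hlt.not_ge
    | succ k ih =>
      intro x hx hlt
      have hlow : ∀ z ∈ ball x ε, ‖x‖ + ε / 2 < ‖z‖ → q ^ k * c ≤ m z := by
        intro z hz hxz
        refine (hball x hx hz).elim (fun hzΩ => ih z hzΩ ?_) (hΓpow k z)
        push_cast at hlt
        linarith
      calc q ^ (k + 1) * c = β * ((1 / 4) ^ Module.finrank ℝ E * (q ^ k * c)) := by
            rw [pow_succ, hq]; ring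
        _ ≤ β * ⨍ z in ball x ε, m z ∂μ := by
            gcongr
            exact pow_finrank_mul_le_setAverage_ball_of_forall_lt_norm hε (hint x hx)
              (fun z hz => hnonneg z (hball x hx hz)) hlow
        _ ≤ m x := hmean x hx
  obtain ⟨N, hN⟩ := exists_nat_gt (R / (ε / 2))
  rw [div_lt_iff₀ (by positivity)] at hN
  exact ⟨q ^ N * c, by positivity, fun x hx =>
    hx.elim (fun hxΩ => hlayer N x hxΩ (by linarith [norm_nonneg x])) (hΓpow N x)⟩

end MinimumPrinciple

section Comparison

/-- The right-hand side of the DPP at `x`, so that the DPP for `u` in `Ω` reads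
`∀ x ∈ Ω, u x = dppOperator volume α β ε u x`. The coefficients `α` and `β` are kept free. -/
noncomputable def dppOperator {X : Type*} [PseudoMetricSpace X] [MeasurableSpace X]
    (μ : Measure X) (α β ε : ℝ) (u : X → ℝ) (x : X) : ℝ :=
  α / (2 * ε) * (∫ t in (0 : ℝ)..ε, (sSup (u '' ball x t) + sInf (u '' ball x t)))
    + β * ⨍ z in ball x ε, u z ∂μ

lemma dppOperator_neg {X : Type*} [PseudoMetricSpace X] [MeasurableSpace X]
    (μ : Measure X) (α β ε : ℝ) (u : X → ℝ) (x : X) :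
    dppOperator μ α β ε (-u) x = -dppOperator μ α β ε u x := by
  have hmid : ∀ t, sSup ((-u) '' ball x t) + sInf ((-u) '' ball x t) =
      -(sSup (u '' ball x t) + sInf (u '' ball x t)) := fun t => by
    rw [neg_image, Real.sSup_neg, Real.sInf_neg]
    ring
  have havg : ⨍ z in ball x ε, (-u) z ∂μ = -⨍ z in ball x ε, u z ∂μ := average_neg _ u
  simp only [dppOperator, hmid, havg, intervalIntegral.integral_neg]
  ring

variable {E : Type*} [NormedAddCommGroup E] [NormedSpace ℝ E] [FiniteDimensional ℝ E]
  [MeasurableSpace E] [BorelSpace E] {μ : Measure E} [μ.IsAddHaarMeasure] {α β ε : ℝ}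
  {u : E → ℝ} {x : E} {L : StrongDual ℝ E} {C M : ℝ}

lemma setAverage_ball_clm_add_const_sub (hε : 0 < ε) (hu : IntegrableOn u (ball x ε) μ) :
    ⨍ z in ball x ε, (L z + M - u z) ∂μ = L x + M - ⨍ z in ball x ε, u z ∂μ := by
  have hconst : IntegrableOn (fun _ => M) (ball x ε) μ := integrableOn_const measure_ball_lt_top.ne
  have hL : IntegrableOn L (ball x ε) μ := integrableOn_ball_of_continuous L.continuous
  calc ⨍ z in ball x ε, (L z + M - u z) ∂μ
      = ⨍ z in ball x ε, L z ∂μ + ⨍ _ in ball x ε, M ∂μ - ⨍ z in ball x ε, u z ∂μ := by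
        rw [average, average, average, average, ← integral_add hL.to_average hconst.to_average]
        exact integral_sub (Integrable.to_average (hL.add hconst)) hu.to_average
    _ = L x + M - ⨍ z in ball x ε, u z ∂μ := by
        rw [setAverage_ball_clm L hε,
          setAverage_const (measure_ball_pos μ x hε).ne' measure_ball_lt_top.ne]

lemma mul_setAverage_sub_le_of_le_dppOperator (hε : 0 < ε) (hα : 0 ≤ α) (hαβ : α + β = 1)
    (hu : AEStronglyMeasurable u (μ.restrict (ball x ε))) (hC : ∀ y ∈ ball x ε, |u y| ≤ C)
    (hle : ∀ y ∈ ball x ε, u y ≤ L y + M) (hdpp : u x ≤ dppOperator μ α β ε u x) :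
    β * ⨍ z in ball x ε, (L z + M - u z) ∂μ ≤ L x + M - u x := by
  have hpair : ∀ y ∈ ball x ε, u y + u (x + x - y) ≤ 2 * (L x + M) := by
    intro y hy
    have hrefl := hle (x + x - y) (add_self_sub_mem_ball_iff.2 hy)
    rw [map_sub, map_add] at hrefl
    linarith [hle y hy]
  have hmid : α / (2 * ε) * (∫ t in (0 : ℝ)..ε, (sSup (u '' ball x t) + sInf (u '' ball x t)))
      ≤ α * (L x + M) :=
    calc _ ≤ α / (2 * ε) * (ε * (2 * (L x + M))) := by
          gcongr
          exact integral_sSup_add_sInf_image_ball_le hε.le hC hpair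
      _ = α * (L x + M) := by field_simp
  rw [setAverage_ball_clm_add_const_sub hε (integrableOn_ball_of_forall_abs_le hu hC)]
  rw [dppOperator] at hdpp
  obtain rfl : α = 1 - β := by linarith
  linarith

variable [Nontrivial E] {Ω Γ : Set E}

lemma le_clm_add_const_of_le_dppOperator (hΩ : Bornology.IsBounded Ω) (hε : 0 < ε) (hα : 0 ≤ α)
    (hβ : 0 < β) (hαβ : α + β = 1) (hball : ∀ x ∈ Ω, ball x ε ⊆ Ω ∪ Γ)
    (hu : AEStronglyMeasurable u (μ.restrict (Ω ∪ Γ))) (hC : ∀ x ∈ Ω ∪ Γ, |u x| ≤ C)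
    (hdpp : ∀ x ∈ Ω, u x ≤ dppOperator μ α β ε u x) {a : ℝ} (hΓ : ∀ x ∈ Γ, u x ≤ L x + a) :
    ∀ x ∈ Ω ∪ Γ, u x ≤ L x + a := by
  by_contra! ⟨x₀, hx₀, hlt⟩
  set w : E → ℝ := fun x => u x - L x
  have hbdd : BddAbove (w '' (Ω ∪ Γ)) := by
    obtain ⟨K, hK⟩ := (L.lipschitz.isBounded_image hΩ).exists_norm_le
    refine ⟨max (C + K) a, ?_⟩
    rintro _ ⟨x, hx | hx, rfl⟩
    · refine le_max_of_le_left ?_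
      linarith [(abs_le.1 (hC x (.inl hx))).2, (abs_le.1 (hK (L x) (mem_image_of_mem L hx))).1]
    · exact le_max_of_le_right (sub_le_iff_le_add'.2 (hΓ x hx))
  set M : ℝ := sSup (w '' (Ω ∪ Γ))
  have hleM : ∀ x ∈ Ω ∪ Γ, u x ≤ L x + M := fun x hx =>
    sub_le_iff_le_add'.1 (le_csSup hbdd (mem_image_of_mem w hx))
  have haM : a < M := by linarith [hleM x₀ hx₀]
  have hmeas : ∀ x ∈ Ω, AEStronglyMeasurable u (μ.restrict (ball x ε)) := fun x hx =>
    hu.mono_set (hball x hx)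
  have hCball : ∀ x ∈ Ω, ∀ y ∈ ball x ε, |u y| ≤ C := fun x hx y hy => hC y (hball x hx hy)
  have hint : ∀ x ∈ Ω, IntegrableOn (fun z => L z + M - u z) (ball x ε) μ := fun x hx =>
    (integrableOn_ball_of_continuous (by fun_prop)).sub
      (integrableOn_ball_of_forall_abs_le (hmeas x hx) (hCball x hx))
  obtain ⟨κ, hκ, hκle⟩ := exists_pos_le_of_mul_setAverage_le hΩ hε hβ (by linarith)
    (sub_pos.2 haM) hball hint (fun x hx => sub_nonneg.2 (hleM x hx))
    (fun x hx => by linarith [hΓ x hx])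
    fun x hx => mul_setAverage_sub_le_of_le_dppOperator hε hα hαβ (hmeas x hx) (hCball x hx)
      (fun y hy => hleM y (hball x hx hy)) (hdpp x hx)
  have hM : M ≤ M - κ := by
    refine csSup_le ⟨w x₀, mem_image_of_mem w hx₀⟩ ?_
    rintro _ ⟨x, hx, rfl⟩
    exact sub_le_iff_le_add'.2 (by linarith [hκle x hx])
  linarith

theorem comparison_with_planes_general (hΩ : Bornology.IsBounded Ω) (hε : 0 < ε) (hα : 0 ≤ α)
    (hβ : 0 < β) (hαβ : α + β = 1) {b δ : ℝ}
    (hu : AEStronglyMeasurable u (μ.restrict (Ω ∪ outerStrip Ω ε)))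
    (hbdd : ∃ C, ∀ x ∈ Ω ∪ outerStrip Ω ε, |u x| ≤ C)
    (hdpp : ∀ x ∈ Ω, u x = dppOperator μ α β ε u x)
    (hplane : ∀ x ∈ outerStrip Ω ε, |u x - L x - b| ≤ δ) :
    ∀ x ∈ Ω ∪ outerStrip Ω ε, L x - δ + b ≤ u x ∧ u x ≤ L x + δ + b := by
  obtain ⟨C, hC⟩ := hbdd
  have hball : ∀ x ∈ Ω, ball x ε ⊆ Ω ∪ outerStrip Ω ε := fun _ => ball_subset_union_outerStrip
  have hupper : ∀ x ∈ Ω ∪ outerStrip Ω ε, u x ≤ L x + (δ + b) :=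
    le_clm_add_const_of_le_dppOperator hΩ hε hα hβ hαβ hball hu hC (fun x hx => (hdpp x hx).le)
      fun x hx => by linarith [(abs_le.1 (hplane x hx)).2]
  have hlower : ∀ x ∈ Ω ∪ outerStrip Ω ε, (-u) x ≤ (-L) x + (δ - b) :=
    le_clm_add_const_of_le_dppOperator hΩ hε hα hβ hαβ hball hu.neg
      (fun x hx => (abs_neg (u x)).trans_le (hC x hx))
      (fun x hx => by rw [dppOperator_neg, Pi.neg_apply, hdpp x hx])
      fun x hx => by
        rw [Pi.neg_apply, neg_apply]
        linarith [(abs_le.1 (hplane x hx)).1]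
  intro x hx
  have hlow := hlower x hx
  rw [Pi.neg_apply, neg_apply] at hlow
  exact ⟨by linarith, by linarith [hupper x hx]⟩

end Comparison

/-- **Comparison with planes (Lemma 4.1).** Let `|F(x) − ν·x − b| ≤ δ` on `Γ_ε`. If `u` is
a bounded Borel function on `Ω_ε` satisfying the DPP at every point of `Ω` with `u = F` on
`Γ_ε`, then `ν·x − δ + b ≤ u(x) ≤ ν·x + δ + b` for every `x ∈ Ω_ε`. -/
theorem comparison_with_planes (n : ℕ) (hn : 2 ≤ n) (p : ℝ) (hp : 2 < p)
    (Ω : Set (EuclideanSpace ℝ (Fin n)))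
    (hΩopen : IsOpen Ω) (hΩconn : IsConnected Ω) (hΩbdd : Bornology.IsBounded Ω)
    (ε : ℝ) (hε : ε ∈ Set.Ioo (0 : ℝ) 1)
    (ν : EuclideanSpace ℝ (Fin n)) (b δ : ℝ) (hδ : 0 < δ)
    (F u : EuclideanSpace ℝ (Fin n) → ℝ)
    (hFmeas : Measurable F)
    (hFbdd : ∃ M, ∀ x ∈ {x | x ∉ Ω ∧ Metric.infDist x (frontier Ω) ≤ ε}, |F x| ≤ M)
    (hFplane : ∀ x ∈ {x | x ∉ Ω ∧ Metric.infDist x (frontier Ω) ≤ ε}, |F x - ⟪ν, x⟫ - b| ≤ δ)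
    (humeas : Measurable u)
    (hubdd : ∃ M, ∀ x ∈ Ω ∪ {x | x ∉ Ω ∧ Metric.infDist x (frontier Ω) ≤ ε}, |u x| ≤ M)
    (hudpp : ∀ x ∈ Ω, u x =
        ((p - 2) / (n + p)) / (2 * ε) *
            (∫ t in (0 : ℝ)..ε, (sSup (u '' Metric.ball x t) + sInf (u '' Metric.ball x t)))
          + ((n + 2) / (n + p)) * ⨍ z in Metric.ball x ε, u z)
    (hbdry : ∀ x ∈ {x | x ∉ Ω ∧ Metric.infDist x (frontier Ω) ≤ ε}, u x = F x) :
    ∀ x ∈ Ω ∪ {x | x ∉ Ω ∧ Metric.infDist x (frontier Ω) ≤ ε},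
      ⟪ν, x⟫ - δ + b ≤ u x ∧ u x ≤ ⟪ν, x⟫ + δ + b := by
  have hnp : (0 : ℝ) < n + p := by positivity
  have : NeZero n := ⟨by lia⟩
  exact comparison_with_planes_general (L := innerSL ℝ ν) hΩbdd hε.1
    (div_nonneg (sub_nonneg.2 hp.le) hnp.le) (by positivity) (by field_simp; ring)
    humeas.aestronglyMeasurable hubdd hudpp fun x hx => hbdry x hx ▸ hFplane x hx
end
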